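/- With the data below, for every α ∈ (η₁, η₂] one has Q(α) = 2 + (8 l₁² / ((k(α)² − l₁²)(l₁² − 1))) · ( E(k(α))/K(k(α)) + (k(α)² − l₁²)/l₁² − ((k(α)² − l₁⁴)/l₁²) · Π(l₁², k(α))/K(k(α)) ). -/

import Mathlib

/-- Complete elliptic integral of the first kind:
`K(k) = ∫₀¹ ds/√((1−s²)(1−k²s²))`. -/
noncomputable def ellK (k : ℝ) : ℝ :=
  ∫ s in (0 : ℝ)..1, 1 / Real.sqrt ((1 - s ^ 2) * (1 - k ^ 2 * s ^ 2))

/-- Complete elliptic integral of the second kind: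
`E(k) = ∫₀¹ √((1−k²s²)/(1−s²)) ds`. -/
noncomputable def ellE (k : ℝ) : ℝ :=
  ∫ s in (0 : ℝ)..1, Real.sqrt ((1 - k ^ 2 * s ^ 2) / (1 - s ^ 2))

/-- Complete elliptic integral of the third kind:
`Π(m,k) = ∫₀¹ ds/((1−ms²)√((1−s²)(1−k²s²)))`. -/
noncomputable def ellPi (m k : ℝ) : ℝ :=
  ∫ s in (0 : ℝ)..1, 1 / ((1 - m * s ^ 2) * Real.sqrt ((1 - s ^ 2) * (1 - k ^ 2 * s ^ 2)))

/-- `l(x) = (x−1)/(x+1)`. -/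
noncomputable def lpar (x : ℝ) : ℝ := (x - 1) / (x + 1)

/-- `k(α) = l₁/l(α)` (with `l₁ = l(η₁)`). -/
noncomputable def kfun (η₁ α : ℝ) : ℝ := lpar η₁ / lpar α

/-- `ρ_α(s) = √((η₁−s)(s−η₁⁻¹)(α−s)(s−α⁻¹))`. -/
noncomputable def rho (η₁ α s : ℝ) : ℝ :=
  Real.sqrt ((η₁ - s) * (s - η₁⁻¹) * (α - s) * (s - α⁻¹))

/-- `Q(α) = (∫_{η₁⁻¹}^{η₁} (s²+s⁻²)/ρ_α(s) ds)/(∫_{η₁⁻¹}^{η₁} ds/ρ_α(s))`. -/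
noncomputable def Qfun (η₁ α : ℝ) : ℝ :=
  (∫ s in η₁⁻¹..η₁, (s ^ 2 + (s⁻¹) ^ 2) / rho η₁ α s) /
    (∫ s in η₁⁻¹..η₁, 1 / rho η₁ α s)

/-!
The Cayley transform `s = (1 + l₁ t) / (1 - l₁ t)` maps `[-1, 1]` onto `[η₁⁻¹, η₁]`. Since
`l₁ t = l(α) (k t)`, both factors `(η₁ - s)(s - η₁⁻¹)` and `(α - s)(s - α⁻¹)` of `ρ_α²` transform by
the same rule, into multiples of `1 - t²` and `1 - k² t²`, so `ds / ρ_α` becomes a constant times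
the Legendre form `dt / √((1 - t²)(1 - k² t²))`. With `m = l₁²`,
`s² + s⁻² = 2 + 16 ((1 - m t²)⁻² - (1 - m t²)⁻¹)`, whence `Q = 2 + 16 (Π₂ - Π) / K` for the integral
`Π₂` with a squared factor `1 - m t²`. Integrating the derivative of
`t √((1 - t²)(1 - k² t²)) / (1 - m t²)`, which vanishes at both endpoints, expresses `Π₂` through
`K`, `E` and `Π`.
-/

open MeasureTheory Set

theorem intervalIntegral_neg_self_eq_two_smul_of_even {E : Type*} [NormedAddCommGroup E]
    [NormedSpace ℝ E] {f : ℝ → E} {a : ℝ} (hf : f.Even) (hint : IntervalIntegrable f volume 0 a) :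
    ∫ x in -a..a, f x = (2 : ℝ) • ∫ x in 0..a, f x := by
  have hcomp : (fun x => f (-x)) = f := funext hf
  have hint_neg : IntervalIntegrable f volume (-a) 0 := by
    simpa [hcomp] using (IntervalIntegrable.iff_comp_neg (by simp)).mp hint.symm
  have hreflect : ∫ x in -a..0, f x = ∫ x in 0..a, f x := by
    simpa [hcomp] using (intervalIntegral.integral_comp_neg (a := 0) (b := a) f).symm
  rw [← intervalIntegral.integral_add_adjacent_intervals hint_neg hint, hreflect, two_smul]

theorem sq_le_one_of_mem_uIcc {t : ℝ} (ht : t ∈ uIcc (0 : ℝ) 1) : t ^ 2 ≤ 1 := by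
  rw [uIcc_of_le zero_le_one] at ht
  exact pow_le_one₀ ht.1 ht.2

theorem one_sub_mul_sq_pos {c t : ℝ} (hc : c < 1) (ht : t ^ 2 ≤ 1) : 0 < 1 - c * t ^ 2 := by
  rcases le_or_gt c 0 with hc₀ | hc₀ <;> nlinarith [sq_nonneg t]

section CayleyTransform

/-- The Cayley transform `u ↦ (1 + u) / (1 - u)`, the inverse of `lpar`; it is the substitution that
brings `Qfun` to Legendre form. -/
noncomputable def cayley (u : ℝ) : ℝ := (1 + u) / (1 - u)

theorem cayley_neg (u : ℝ) : cayley (-u) = (cayley u)⁻¹ := by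
  simp only [cayley, inv_div, sub_neg_eq_add, ← sub_eq_add_neg]

theorem cayley_lpar {x : ℝ} (hx : x + 1 ≠ 0) : cayley (lpar x) = x := by
  have hnum : 1 + lpar x = 2 * x / (x + 1) := by unfold lpar; field_simp; ring
  have hden : 1 - lpar x = 2 / (x + 1) := by unfold lpar; field_simp; ring
  rw [cayley, hnum, hden]
  field_simp

theorem hasDerivAt_cayley {u : ℝ} (hu : u ≠ 1) : HasDerivAt cayley (2 / (1 - u) ^ 2) u := by
  have hden : 1 - u ≠ 0 := sub_ne_zero.mpr hu.symm
  refine (((hasDerivAt_id u).const_add 1).div ((hasDerivAt_id u).const_sub 1) hden).congr_deriv ?_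
  simp only [id]
  ring

theorem cayley_sq_add_inv_sq {u : ℝ} (hu : u ^ 2 ≠ 1) :
    cayley u ^ 2 + (cayley u)⁻¹ ^ 2 = 2 + 16 * (1 / (1 - u ^ 2) ^ 2 - 1 / (1 - u ^ 2)) := by
  have hsub : 1 - u ≠ 0 := fun h => hu (by linear_combination -(1 + u) * h)
  have hadd : 1 + u ≠ 0 := fun h => hu (by linear_combination -(1 - u) * h)
  have hfactor : 1 - u ^ 2 = (1 - u) * (1 + u) := by ring
  rw [cayley, inv_div, hfactor]
  field_simp
  ring

theorem sub_cayley_mul_cayley_sub_inv {x t : ℝ} (hx₀ : x ≠ 0) (hx₁ : x + 1 ≠ 0)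
    (ht : lpar x * t ≠ 1) :
    (x - cayley (lpar x * t)) * (cayley (lpar x * t) - x⁻¹) =
      (x - 1) ^ 2 / x * (1 - t ^ 2) / (1 - lpar x * t) ^ 2 := by
  have hden : 1 - lpar x * t ≠ 0 := sub_ne_zero.mpr ht.symm
  have hl : lpar x * (x + 1) = x - 1 := div_mul_cancel₀ _ hx₁
  have hupper : x - cayley (lpar x * t) = (x - 1) * (1 - t) / (1 - lpar x * t) := by
    rw [cayley]
    field_simp
    linear_combination -t * hl
  have hlower : cayley (lpar x * t) - x⁻¹ = (x - 1) / x * (1 + t) / (1 - lpar x * t) := by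
    rw [cayley]
    field_simp
    linear_combination t * hl
  rw [hupper, hlower, div_mul_div_comm, ← sq]
  ring

end CayleyTransform

section Modulus

theorem lpar_pos {x : ℝ} (hx : 1 < x) : 0 < lpar x :=
  div_pos (by linarith) (by linarith)

theorem lpar_lt_one {x : ℝ} (hx : -1 < x) : lpar x < 1 := by
  rw [lpar, div_lt_one (by linarith)]
  linarith

theorem lpar_strictMonoOn : StrictMonoOn lpar (Ioi (-1)) := by
  intro x hx y hy hxy
  rw [mem_Ioi] at hx hy
  rw [lpar, lpar, div_lt_div_iff₀ (by linarith) (by linarith)]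
  linarith

variable {η α : ℝ}

theorem lpar_lt_kfun (hη : 1 < η) (hα : 1 < α) : lpar η < kfun η α :=
  (lt_div_iff₀ (lpar_pos hα)).mpr
    (mul_lt_of_lt_one_right (lpar_pos hη) (lpar_lt_one (by linarith)))

theorem kfun_lt_one (hη : 1 < η) (hηα : η < α) : kfun η α < 1 :=
  (div_lt_one (lpar_pos (hη.trans hηα))).mpr
    (lpar_strictMonoOn (mem_Ioi.mpr (by linarith)) (mem_Ioi.mpr (by linarith)) hηα)

theorem kfun_sq_lt_one (hη : 1 < η) (hηα : η < α) : kfun η α ^ 2 < 1 :=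
  pow_lt_one₀ ((lpar_pos hη).trans (lpar_lt_kfun hη (hη.trans hηα))).le
    (kfun_lt_one hη hηα) two_ne_zero

theorem lpar_sq_lt_one (hη : 1 < η) : lpar η ^ 2 < 1 :=
  pow_lt_one₀ (lpar_pos hη).le (lpar_lt_one (by linarith)) two_ne_zero

theorem lpar_sq_lt_kfun_sq (hη : 1 < η) (hα : 1 < α) : lpar η ^ 2 < kfun η α ^ 2 :=
  pow_lt_pow_left₀ (lpar_lt_kfun hη hα) (lpar_pos hη).le two_ne_zero

theorem lpar_mul_lt_one (hη : 1 < η) {t : ℝ} (ht : t ≤ 1) : lpar η * t < 1 :=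
  (mul_le_of_le_one_right (lpar_pos hη).le ht).trans_lt (lpar_lt_one (by linarith))

end Modulus

section LegendreForm

/-- The square root `√((1 - t²)(1 - k²t²))` of Legendre's normal form, the common denominator of the
elliptic integrals of modulus `k`. -/
noncomputable def legendreSqrt (k t : ℝ) : ℝ := √((1 - t ^ 2) * (1 - k ^ 2 * t ^ 2))

/-- The integral `Π₂(m, k) = ∫₀¹ dt / ((1 - mt²)² √((1 - t²)(1 - k²t²)))`, with a pole of order one
higher than in `ellPi`; the numerator of `Qfun` leads to it. -/
noncomputable def ellPiTwo (m k : ℝ) : ℝ :=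
  ∫ t in (0 : ℝ)..1, 1 / ((1 - m * t ^ 2) ^ 2 * legendreSqrt k t)

variable {k m : ℝ}

theorem legendreSqrt_eq_mul_sqrt {t : ℝ} (ht : t ^ 2 ≤ 1) :
    legendreSqrt k t = √(1 - t ^ 2) * √(1 - k ^ 2 * t ^ 2) :=
  Real.sqrt_mul (sub_nonneg.mpr ht) _

theorem continuous_legendreSqrt : Continuous (legendreSqrt k) := by
  unfold legendreSqrt
  fun_prop

theorem legendreSqrt_even : (legendreSqrt k).Even := fun t => by
  simp only [legendreSqrt, neg_sq]

theorem legendreSqrt_radicand_pos (hk : k ^ 2 < 1) {t : ℝ} (ht : t ^ 2 < 1) :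
    0 < (1 - t ^ 2) * (1 - k ^ 2 * t ^ 2) :=
  mul_pos (sub_pos.mpr ht) (one_sub_mul_sq_pos hk ht.le)

theorem legendreSqrt_pos (hk : k ^ 2 < 1) {t : ℝ} (ht : t ^ 2 < 1) : 0 < legendreSqrt k t :=
  Real.sqrt_pos.mpr (legendreSqrt_radicand_pos hk ht)

theorem intervalIntegrable_div_legendreSqrt (hk : k ^ 2 < 1) {g : ℝ → ℝ}
    (hg : ContinuousOn g (uIcc 0 1)) :
    IntervalIntegrable (fun t => g t / legendreSqrt k t) volume 0 1 := by
  have hbase : IntervalIntegrable (fun t : ℝ => √(1 - t ^ 2)⁻¹) volume 0 1 :=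
    Polynomial.Chebyshev.intervalIntegrable_sqrt_one_sub_sq_inv.mono_set
      (uIcc_subset_uIcc (by simp) (by simp))
  have hquot : ContinuousOn (fun t => g t / √(1 - k ^ 2 * t ^ 2)) (uIcc 0 1) :=
    hg.div (by fun_prop) fun t ht =>
      (Real.sqrt_pos.mpr (one_sub_mul_sq_pos hk (sq_le_one_of_mem_uIcc ht))).ne'
  refine (hbase.continuousOn_mul hquot).congr fun t ht => ?_
  simp only [legendreSqrt_eq_mul_sqrt (sq_le_one_of_mem_uIcc (uIoc_subset_uIcc ht)),
    Real.sqrt_inv]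
  ring

theorem intervalIntegrable_one_div_legendreSqrt (hk : k ^ 2 < 1) :
    IntervalIntegrable (fun t => 1 / legendreSqrt k t) volume 0 1 :=
  intervalIntegrable_div_legendreSqrt hk continuousOn_const

theorem intervalIntegrable_ellPi (hk : k ^ 2 < 1) (hm : m < 1) :
    IntervalIntegrable (fun t => 1 / ((1 - m * t ^ 2) * legendreSqrt k t)) volume 0 1 := by
  simp only [← div_div]
  exact intervalIntegrable_div_legendreSqrt hk <| continuousOn_const.div (by fun_prop)
    fun t ht => (one_sub_mul_sq_pos hm (sq_le_one_of_mem_uIcc ht)).ne'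

theorem intervalIntegrable_ellPiTwo (hk : k ^ 2 < 1) (hm : m < 1) :
    IntervalIntegrable (fun t => 1 / ((1 - m * t ^ 2) ^ 2 * legendreSqrt k t)) volume 0 1 := by
  simp only [← div_div]
  exact intervalIntegrable_div_legendreSqrt hk <| continuousOn_const.div (by fun_prop)
    fun t ht => pow_ne_zero 2 (one_sub_mul_sq_pos hm (sq_le_one_of_mem_uIcc ht)).ne'

theorem ellK_pos (hk : k ^ 2 < 1) : 0 < ellK k :=
  intervalIntegral.intervalIntegral_pos_of_pos_on (intervalIntegrable_one_div_legendreSqrt hk)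
    (fun _ ht => one_div_pos.mpr
      (legendreSqrt_pos hk (pow_lt_one₀ ht.1.le ht.2 two_ne_zero))) zero_lt_one

theorem ellE_eq_integral_div_legendreSqrt (hk : k ^ 2 < 1) :
    ellE k = ∫ t in (0 : ℝ)..1, (1 - k ^ 2 * t ^ 2) / legendreSqrt k t := by
  refine intervalIntegral.integral_congr fun t ht => ?_
  have ht' := sq_le_one_of_mem_uIcc ht
  have hb := one_sub_mul_sq_pos hk ht'
  simp only [legendreSqrt_eq_mul_sqrt ht']
  rw [Real.sqrt_div hb.le, mul_comm √(1 - t ^ 2), ← div_div, Real.div_sqrt]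

theorem hasDerivAt_legendreSqrt (hk : k ^ 2 < 1) {t : ℝ} (ht : t ^ 2 < 1) :
    HasDerivAt (legendreSqrt k) (t * (2 * k ^ 2 * t ^ 2 - 1 - k ^ 2) / legendreSqrt k t) t := by
  have hfactor (c : ℝ) : HasDerivAt (fun s : ℝ => 1 - c * s ^ 2) (-(c * (2 * t))) t := by
    simpa using (((hasDerivAt_id t).pow 2).const_mul c).const_sub 1
  have hone : HasDerivAt (fun s : ℝ => 1 - s ^ 2) (-(2 * t)) t := by simpa using hfactor 1
  refine ((hone.mul (hfactor (k ^ 2))).sqrt (legendreSqrt_radicand_pos hk ht).ne').congr_deriv ?_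
  have hw := (legendreSqrt_pos hk ht).ne'
  change _ / (2 * legendreSqrt k t) = _
  field_simp
  ring

-- The factor `m²` clears the denominators of the partial fractions, so that `m = 0` is included.
theorem hasDerivAt_mul_legendreSqrt_div (hk : k ^ 2 < 1) (hm : m < 1) {t : ℝ} (ht : t ^ 2 < 1) :
    HasDerivAt (fun s => m ^ 2 * (s * legendreSqrt k s / (1 - m * s ^ 2)))
      (m * ((1 - k ^ 2 * t ^ 2) / legendreSqrt k t)
        + (k ^ 2 - m) * (1 / legendreSqrt k t)
        - (k ^ 2 - m ^ 2) * (1 / ((1 - m * t ^ 2) * legendreSqrt k t))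
        - 2 * (k ^ 2 - m) * (m - 1) * (1 / ((1 - m * t ^ 2) ^ 2 * legendreSqrt k t)
          - 1 / ((1 - m * t ^ 2) * legendreSqrt k t))) t := by
  have hden := (one_sub_mul_sq_pos hm ht.le).ne'
  have hw := (legendreSqrt_pos hk ht).ne'
  have hw_sq : legendreSqrt k t ^ 2 = (1 - t ^ 2) * (1 - k ^ 2 * t ^ 2) :=
    Real.sq_sqrt (legendreSqrt_radicand_pos hk ht).le
  have hderiv_den : HasDerivAt (fun s : ℝ => 1 - m * s ^ 2) (-(m * (2 * t))) t := by
    simpa using (((hasDerivAt_id t).pow 2).const_mul m).const_sub 1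
  refine ((((hasDerivAt_id t).mul (hasDerivAt_legendreSqrt hk ht)).div hderiv_den
    hden).const_mul (m ^ 2)).congr_deriv ?_
  simp only [Pi.mul_apply, id]
  field_simp
  rw [hw_sq]
  ring

theorem ellPiTwo_sub_ellPi (hk : k ^ 2 < 1) (hm : m < 1) :
    2 * (k ^ 2 - m) * (m - 1) * (ellPiTwo m k - ellPi m k) =
      m * ellE k + (k ^ 2 - m) * ellK k - (k ^ 2 - m ^ 2) * ellPi m k := by
  have hE := (intervalIntegrable_div_legendreSqrt hk
    (g := fun t => 1 - k ^ 2 * t ^ 2) (by fun_prop)).const_mul m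
  have hK := (intervalIntegrable_one_div_legendreSqrt hk).const_mul (k ^ 2 - m)
  have hPi := intervalIntegrable_ellPi hk hm
  have hPiTwo := intervalIntegrable_ellPiTwo hk hm
  have hEKPi := (hE.add hK).sub (hPi.const_mul (k ^ 2 - m ^ 2))
  have hdiff := (hPiTwo.sub hPi).const_mul (2 * (k ^ 2 - m) * (m - 1))
  have hcont : ContinuousOn (fun t => m ^ 2 * (t * legendreSqrt k t / (1 - m * t ^ 2)))
      (Icc 0 1) :=
    continuousOn_const.mul <| (continuous_id.mul continuous_legendreSqrt).continuousOn.div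
      (by fun_prop) fun t ht => (one_sub_mul_sq_pos hm (pow_le_one₀ ht.1 ht.2)).ne'
  have hftc := intervalIntegral.integral_eq_sub_of_hasDerivAt_of_le zero_le_one hcont
    (fun t ht => hasDerivAt_mul_legendreSqrt_div hk hm (pow_lt_one₀ ht.1.le ht.2 two_ne_zero))
    (hEKPi.sub hdiff)
  have hboundary : legendreSqrt k 1 = 0 := by simp [legendreSqrt]
  rw [intervalIntegral.integral_sub hEKPi hdiff,
    intervalIntegral.integral_sub (hE.add hK) (hPi.const_mul _),
    intervalIntegral.integral_add hE hK, intervalIntegral.integral_const_mul,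
    intervalIntegral.integral_const_mul, intervalIntegral.integral_const_mul,
    intervalIntegral.integral_const_mul, intervalIntegral.integral_sub hPiTwo hPi,
    hboundary, ← ellE_eq_integral_div_legendreSqrt hk] at hftc
  change m * ellE k + (k ^ 2 - m) * ellK k - (k ^ 2 - m ^ 2) * ellPi m k
    - 2 * (k ^ 2 - m) * (m - 1) * (ellPiTwo m k - ellPi m k) = _ at hftc
  linear_combination -hftc

end LegendreForm

section Substitution

variable {η α : ℝ}

theorem rho_cayley (hη : 1 < η) (hα : 1 < α) {t : ℝ} (ht : t ≤ 1) :
    rho η α (cayley (lpar η * t)) =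
      (η - 1) * (α - 1) / √(η * α) * legendreSqrt (kfun η α) t / (1 - lpar η * t) ^ 2 := by
  have hη₀ : 0 < η := by linarith
  have hα₀ : 0 < α := by linarith
  have hlt := lpar_mul_lt_one hη ht
  have hscale : lpar α * (kfun η α * t) = lpar η * t := by
    rw [← mul_assoc, kfun, mul_div_cancel₀ _ (lpar_pos hα).ne']
  have hfactorη := sub_cayley_mul_cayley_sub_inv hη₀.ne' (by linarith) hlt.ne
  have hfactorα := sub_cayley_mul_cayley_sub_inv (t := kfun η α * t) hα₀.ne' (by linarith)
    (hscale.trans_lt hlt).ne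
  rw [hscale] at hfactorα
  have hcoeff : 0 ≤ (η - 1) * (α - 1) / (1 - lpar η * t) ^ 2 :=
    div_nonneg (mul_nonneg (by linarith) (by linarith)) (sq_nonneg _)
  calc rho η α (cayley (lpar η * t))
      = √(((η - 1) * (α - 1) / (1 - lpar η * t) ^ 2) ^ 2 *
          ((1 - t ^ 2) * (1 - kfun η α ^ 2 * t ^ 2)) / (η * α)) := by
        rw [rho, mul_assoc, hfactorη, hfactorα]
        ring_nf
    _ = (η - 1) * (α - 1) / (1 - lpar η * t) ^ 2 * legendreSqrt (kfun η α) t / √(η * α) := by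
        rw [Real.sqrt_div' _ (by positivity), Real.sqrt_mul (sq_nonneg _), Real.sqrt_sq hcoeff,
          legendreSqrt]
    _ = _ := by ring

theorem integral_div_rho (hη : 1 < η) (hα : 1 < α) (g : ℝ → ℝ) :
    ∫ s in η⁻¹..η, g s / rho η α s =
      2 * lpar η * √(η * α) / ((η - 1) * (α - 1)) *
        ∫ t in (-1 : ℝ)..1, g (cayley (lpar η * t)) / legendreSqrt (kfun η α) t := by
  have hderiv {t : ℝ} (ht : t ≤ 1) : HasDerivAt (fun t => cayley (lpar η * t))
      (2 / (1 - lpar η * t) ^ 2 * lpar η) t :=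
    (hasDerivAt_cayley (lpar_mul_lt_one hη ht).ne).comp t (hasDerivAt_const_mul (lpar η))
  have hleft : cayley (lpar η * -1) = η⁻¹ := by
    rw [mul_neg_one, cayley_neg, cayley_lpar (by linarith)]
  have hright : cayley (lpar η * 1) = η := by rw [mul_one, cayley_lpar (by linarith)]
  have hle {t : ℝ} (ht : t ∈ uIcc (-1 : ℝ) 1) : t ≤ 1 := by
    rw [uIcc_of_le (by norm_num)] at ht
    exact ht.2
  have hsubst := intervalIntegral.integral_comp_mul_deriv_of_deriv_nonneg (a := -1) (b := 1)
    (g := fun s => g s / rho η α s)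
    (fun t ht => (hderiv (hle ht)).continuousAt.continuousWithinAt)
    (fun t ht => hderiv (hle (Ioo_subset_Icc_self ht)))
    (fun t _ => mul_nonneg (by positivity) (lpar_pos hη).le)
  rw [hleft, hright] at hsubst
  rw [← hsubst, ← intervalIntegral.integral_const_mul]
  refine intervalIntegral.integral_congr fun t ht => ?_
  have hden : 1 - lpar η * t ≠ 0 := (sub_pos.mpr (lpar_mul_lt_one hη (hle ht))).ne'
  simp only [Function.comp_apply, rho_cayley hη hα (hle ht)]
  field_simp

theorem integral_one_div_rho (hη : 1 < η) (hηα : η < α) :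
    ∫ s in η⁻¹..η, 1 / rho η α s =
      2 * lpar η * √(η * α) / ((η - 1) * (α - 1)) * (2 * ellK (kfun η α)) := by
  rw [integral_div_rho hη (hη.trans hηα) fun _ => 1,
    intervalIntegral_neg_self_eq_two_smul_of_even (fun t => by rw [legendreSqrt_even])
      (intervalIntegrable_one_div_legendreSqrt (kfun_sq_lt_one hη hηα))]
  rfl

theorem integral_sq_add_inv_sq_div_rho (hη : 1 < η) (hηα : η < α) :
    ∫ s in η⁻¹..η, (s ^ 2 + s⁻¹ ^ 2) / rho η α s =
      2 * lpar η * √(η * α) / ((η - 1) * (α - 1)) * (2 * (2 * ellK (kfun η α) +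
        16 * (ellPiTwo (lpar η ^ 2) (kfun η α) - ellPi (lpar η ^ 2) (kfun η α)))) := by
  set l := lpar η
  set k := kfun η α
  have hk : k ^ 2 < 1 := kfun_sq_lt_one hη hηα
  have hm : l ^ 2 < 1 := lpar_sq_lt_one hη
  have hK := (intervalIntegrable_one_div_legendreSqrt hk).const_mul 2
  have hPi := intervalIntegrable_ellPi hk hm
  have hPiTwo := intervalIntegrable_ellPiTwo hk hm
  have hdiff := (hPiTwo.sub hPi).const_mul 16
  have hpoint {t : ℝ} (ht : t ∈ uIcc (0 : ℝ) 1) :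
      (cayley (l * t) ^ 2 + (cayley (l * t))⁻¹ ^ 2) / legendreSqrt k t =
        2 * (1 / legendreSqrt k t) + 16 * (1 / ((1 - l ^ 2 * t ^ 2) ^ 2 * legendreSqrt k t) -
          1 / ((1 - l ^ 2 * t ^ 2) * legendreSqrt k t)) := by
    have hlt : (l * t) ^ 2 < 1 := by
      linarith [one_sub_mul_sq_pos hm (sq_le_one_of_mem_uIcc ht), mul_pow l t 2]
    rw [cayley_sq_add_inv_sq hlt.ne, mul_pow, ← div_div, ← div_div]
    ring
  have heven : (fun t => (cayley (l * t) ^ 2 + (cayley (l * t))⁻¹ ^ 2) / legendreSqrt k t).Even :=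
    fun t => by simp only [mul_neg, cayley_neg, inv_inv, legendreSqrt_even t, add_comm]
  rw [integral_div_rho hη (hη.trans hηα) fun s => s ^ 2 + s⁻¹ ^ 2,
    intervalIntegral_neg_self_eq_two_smul_of_even heven
      ((hK.add hdiff).congr fun t ht => (hpoint (uIoc_subset_uIcc ht)).symm),
    intervalIntegral.integral_congr fun t ht => hpoint ht, intervalIntegral.integral_add hK hdiff,
    intervalIntegral.integral_const_mul, intervalIntegral.integral_const_mul,
    intervalIntegral.integral_sub hPiTwo hPi]
  rfl

theorem Qfun_eq_ellPiTwo_sub_ellPi (hη : 1 < η) (hηα : η < α) :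
    Qfun η α = 2 + 16 * (ellPiTwo (lpar η ^ 2) (kfun η α) - ellPi (lpar η ^ 2) (kfun η α)) /
      ellK (kfun η α) := by
  have hK := (ellK_pos (kfun_sq_lt_one hη hηα)).ne'
  have hconst : 2 * lpar η * √(η * α) / ((η - 1) * (α - 1)) ≠ 0 := by
    have := lpar_pos hη
    have : 0 < η - 1 := by linarith
    have : 0 < α - 1 := by linarith
    have : 0 < η * α := mul_pos (by linarith) (by linarith)
    positivity
  rw [Qfun, integral_sq_add_inv_sq_div_rho hη hηα, integral_one_div_rho hη hηα,
    mul_div_mul_left _ _ hconst]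
  field_simp

end Substitution

/- STATEMENT 16: Fix 1 < η₁ < η₂ and l₁ := (η₁−1)/(η₁+1).  For every
α ∈ (η₁, η₂], with k := k(α),
Q(α) = 2 + (8 l₁² / ((k² − l₁²)(l₁² − 1))) ·
  ( E(k)/K(k) + (k² − l₁²)/l₁² − ((k² − l₁⁴)/l₁²) · Π(l₁², k)/K(k) ). -/
theorem stmt16 (η₁ η₂ : ℝ) (h1 : 1 < η₁) (h2 : η₁ < η₂) :
    ∀ α ∈ Set.Ioc η₁ η₂,
      Qfun η₁ α =
        2 + 8 * lpar η₁ ^ 2 /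
            ((kfun η₁ α ^ 2 - lpar η₁ ^ 2) * (lpar η₁ ^ 2 - 1)) *
          (ellE (kfun η₁ α) / ellK (kfun η₁ α) +
            (kfun η₁ α ^ 2 - lpar η₁ ^ 2) / lpar η₁ ^ 2 -
            (kfun η₁ α ^ 2 - lpar η₁ ^ 4) / lpar η₁ ^ 2 *
              (ellPi (lpar η₁ ^ 2) (kfun η₁ α) / ellK (kfun η₁ α))) := by
  rintro α ⟨hα, -⟩
  have hk := kfun_sq_lt_one h1 hα
  have hm := lpar_sq_lt_one h1
  have hl := (lpar_pos h1).ne'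
  have hK := (ellK_pos hk).ne'
  have hkm := (sub_pos.mpr (lpar_sq_lt_kfun_sq h1 (h1.trans hα))).ne'
  have hm₁ := (sub_neg.mpr hm).ne
  rw [Qfun_eq_ellPiTwo_sub_ellPi h1 hα]
  field_simp
  linear_combination 8 * ellPiTwo_sub_ellPi hk hm
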